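/- arXiv:2512.10085 — 6 statements merged into one kernel-verified Lean document; each statement's English description precedes it below -/
import Mathlib

section
/- For every real number λ0 > 0 and every λ with 0 ≤ λ ≤ λ0, one has e^λ − 1 ≤ λ + θ0·λ², where θ0 = (e^{λ0} − 1 − λ0)/λ0². -/
theorem quartic_aux (x : ℝ) :
    HasSum (fun n : ℕ => x ^ (n + 2) / ((n + 2).factorial : ℝ)) (Real.exp x - 1 - x) := by
  have h := NormedSpace.expSeries_div_hasSum_exp (𝔸 := ℝ) x
  rw [← Real.exp_eq_exp_ℝ] at h
  have h2 := (hasSum_nat_add_iff' 2).2 h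
  have e : Real.exp x - 1 - x = Real.exp x - ∑ i ∈ Finset.range 2, x ^ i / (i.factorial : ℝ) := by
    simp [Finset.sum_range_succ]
    ring
  rw [e]
  exact h2

theorem quartic_a (lam0 : ℝ) (hlam0 : 0 < lam0) (lam : ℝ)
    (h1 : 0 ≤ lam) (h2 : lam ≤ lam0) :
    Real.exp lam - 1 ≤ lam + ((Real.exp lam0 - 1 - lam0) / lam0 ^ 2) * lam ^ 2 := by
  have key : (Real.exp lam - 1 - lam) * lam0 ^ 2 ≤ (Real.exp lam0 - 1 - lam0) * lam ^ 2 := by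
    refine hasSum_le (fun n => ?_) ((quartic_aux lam).mul_right (lam0 ^ 2))
      ((quartic_aux lam0).mul_right (lam ^ 2))
    rw [div_mul_eq_mul_div, div_mul_eq_mul_div]
    have hp : lam ^ n ≤ lam0 ^ n := pow_le_pow_left₀ h1 h2 n
    have : lam ^ (n + 2) * lam0 ^ 2 ≤ lam0 ^ (n + 2) * lam ^ 2 := by
      have := mul_le_mul_of_nonneg_right hp (by positivity : 0 ≤ lam ^ 2 * lam0 ^ 2)
      rw [pow_add, pow_add]
      linarith
    gcongr
  have h3 : Real.exp lam - 1 - lam ≤ (Real.exp lam0 - 1 - lam0) * lam ^ 2 / lam0 ^ 2 := by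
    rwa [le_div_iff₀ (by positivity)]
  rw [div_mul_eq_mul_div]
  linarith
end

section
/- Let (Ω, μ) be a probability space and N : Ω → ℝ a measurable function with N ≥ 0 almost everywhere. Let λ0 > 0 be such that ω ↦ exp(λ0·N(ω)) is integrable, and set μ1 := E[N] and κ0 := (E[e^{λ0 N}] − 1 − λ0·μ1)/λ0². Then for every λ with 0 ≤ λ ≤ λ0, E[e^{λ N}] ≤ 1 + μ1·λ + κ0·λ². -/
open MeasureTheory

theorem exp_rem_le (x s : ℝ) (hx : 0 ≤ x) (hs : 0 ≤ s) (hs1 : s ≤ 1) :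
    Real.exp (s * x) - 1 - s * x ≤ s ^ 2 * (Real.exp x - 1 - x) := by
  have key : ∀ y : ℝ, HasSum (fun n : ℕ => y ^ (n + 2) / ((n + 2).factorial : ℝ))
      (Real.exp y - 1 - y) := by
    intro y
    have h : HasSum (fun n : ℕ => y ^ n / (n.factorial : ℝ)) (Real.exp y) := by
      rw [Real.exp_eq_exp_ℝ]
      exact NormedSpace.expSeries_div_hasSum_exp y
    have h' := (hasSum_nat_add_iff' 2).mpr h
    have e : Real.exp y - ∑ i ∈ Finset.range 2, y ^ i / (i.factorial : ℝ)
        = Real.exp y - 1 - y := by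
      simp [Finset.sum_range_succ]
      ring
    rw [e] at h'
    exact h'
  refine hasSum_le (fun n => ?_) (key (s * x)) ((key x).mul_left (s ^ 2))
  rw [mul_pow, mul_div_assoc]
  have : s ^ (n + 2) ≤ s ^ 2 := pow_le_pow_of_le_one hs hs1 (by omega)
  exact mul_le_mul_of_nonneg_right this (by positivity)

theorem quartic_b {Ω : Type*} [MeasurableSpace Ω] (μ : Measure Ω)
    [IsProbabilityMeasure μ] (N : Ω → ℝ) (hNmeas : Measurable N)
    (hNpos : ∀ᵐ ω ∂μ, 0 ≤ N ω) (lam0 : ℝ) (hlam0 : 0 < lam0)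
    (hint : Integrable (fun ω => Real.exp (lam0 * N ω)) μ)
    (mu1 kappa0 : ℝ)
    (hmu1 : mu1 = ∫ ω, N ω ∂μ)
    (hkappa0 : kappa0 = ((∫ ω, Real.exp (lam0 * N ω) ∂μ) - 1 - lam0 * mu1) / lam0 ^ 2)
    (lam : ℝ) (h1 : 0 ≤ lam) (h2 : lam ≤ lam0) :
    (∫ ω, Real.exp (lam * N ω) ∂μ) ≤ 1 + mu1 * lam + kappa0 * lam ^ 2 := by
  have hN : Integrable N μ := by
    refine (hint.const_mul (1 / lam0)).mono' hNmeas.aestronglyMeasurable ?_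
    filter_upwards [hNpos] with ω hω
    rw [Real.norm_eq_abs, abs_of_nonneg hω, one_div, inv_mul_eq_div, le_div_iff₀ hlam0]
    linarith [Real.add_one_le_exp (lam0 * N ω)]
  have hi : Integrable (fun ω => Real.exp (lam * N ω)) μ :=
    ProbabilityTheory.integrable_exp_mul_of_nonneg_of_le hint h1 h2
  set c : ℝ := (lam / lam0) ^ 2 with hc
  have hR1 : Integrable (fun ω => (1 - c) + (lam - c * lam0) * N ω) μ :=
    (integrable_const _).add (hN.const_mul _)
  have hR : Integrable (fun ω => c * Real.exp (lam0 * N ω) + ((1 - c) +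
      (lam - c * lam0) * N ω)) μ :=
    (hint.const_mul c).add ((integrable_const _).add (hN.const_mul _))
  have hle := integral_mono_ae hi hR (by
    filter_upwards [hNpos] with ω hω
    have h := exp_rem_le (lam0 * N ω) (lam / lam0) (by positivity) (by positivity)
      ((div_le_one hlam0).mpr h2)
    have e : lam / lam0 * (lam0 * N ω) = lam * N ω := by field_simp
    rw [e, ← hc] at h
    show Real.exp (lam * N ω) ≤ _
    linarith)
  rw [integral_add (hint.const_mul c) hR1,
    integral_add (integrable_const _) (hN.const_mul _), integral_const_mul,
    integral_const_mul, ← hmu1] at hle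
  simp only [integral_const, probReal_univ, one_smul] at hle
  refine hle.trans (le_of_eq ?_)
  rw [hkappa0, hc]
  field_simp
  ring
end

section
/- Let (Ω, μ) be a probability space and N : Ω → ℝ a measurable function with N ≥ 0 almost everywhere and N integrable. Then for all real numbers 0 < λ ≤ λ' such that ω ↦ exp(λ'·N(ω)) is integrable, one has (E[e^{λ N}] − 1 − λ·E[N])/λ² ≤ (E[e^{λ' N}] − 1 − λ'·E[N])/λ'², i.e., the parameter κ(λ) := (E[e^{λ N}] − 1 − λ·E[N])/λ² is nondecreasing in λ. -/
open MeasureTheory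

theorem kappa_aux_hasSum (s x : ℝ) (hs : 0 < s) :
    HasSum (fun n : ℕ => s ^ n * x ^ (n + 2) / (n + 2).factorial)
      ((Real.exp (s * x) - 1 - s * x) / s ^ 2) := by
  have h := NormedSpace.expSeries_div_hasSum_exp (s * x)
  rw [← Real.exp_eq_exp_ℝ] at h
  have h2 := ((hasSum_nat_add_iff' 2).mpr h).div_const (s ^ 2)
  convert! h2 using 1
  · funext n
    have : ((n + 2).factorial : ℝ) ≠ 0 := by positivity
    field_simp
    ring
  · simp [Finset.sum_range_succ]
    ring

theorem kappa_aux (s t x : ℝ) (hs : 0 < s) (hst : s ≤ t) (hx : 0 ≤ x) :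
    (Real.exp (s * x) - 1 - s * x) / s ^ 2 ≤ (Real.exp (t * x) - 1 - t * x) / t ^ 2 := by
  refine hasSum_le (fun n => ?_) (kappa_aux_hasSum s x hs)
    (kappa_aux_hasSum t x (hs.trans_le hst))
  gcongr

theorem kappa_monotone {Ω : Type*} [MeasurableSpace Ω] (μ : Measure Ω)
    [IsProbabilityMeasure μ] (N : Ω → ℝ) (hNmeas : Measurable N)
    (hNpos : ∀ᵐ ω ∂μ, 0 ≤ N ω) (hNint : Integrable N μ)
    (lam lam' : ℝ) (hlam : 0 < lam) (hle : lam ≤ lam')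
    (hint : Integrable (fun ω => Real.exp (lam' * N ω)) μ) :
    ((∫ ω, Real.exp (lam * N ω) ∂μ) - 1 - lam * ∫ ω, N ω ∂μ) / lam ^ 2 ≤
      ((∫ ω, Real.exp (lam' * N ω) ∂μ) - 1 - lam' * ∫ ω, N ω ∂μ) / lam' ^ 2 := by
  have hint0 : Integrable (fun ω => Real.exp (lam * N ω)) μ := by
    refine hint.mono' (by fun_prop) ?_
    filter_upwards [hNpos] with ω h
    rw [Real.norm_eq_abs, Real.abs_exp]
    gcongr
  have key : ∀ t : ℝ, Integrable (fun ω => Real.exp (t * N ω)) μ →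
      Integrable (fun ω => (Real.exp (t * N ω) - 1 - t * N ω) / t ^ 2) μ ∧
      ∫ ω, (Real.exp (t * N ω) - 1 - t * N ω) / t ^ 2 ∂μ =
        ((∫ ω, Real.exp (t * N ω) ∂μ) - 1 - t * ∫ ω, N ω ∂μ) / t ^ 2 := by
    intro t ht
    have h1 : Integrable (fun ω => Real.exp (t * N ω) - 1) μ := ht.sub (integrable_const 1)
    refine ⟨(h1.sub (hNint.const_mul t)).div_const _, ?_⟩
    rw [integral_div, integral_sub h1 (hNint.const_mul t),
      integral_sub ht (integrable_const 1), integral_const_mul]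
    simp
  rw [← (key lam hint0).2, ← (key lam' hint).2]
  refine integral_mono_ae (key lam hint0).1 (key lam' hint).1 ?_
  filter_upwards [hNpos] with ω h
  exact kappa_aux _ _ _ hlam hle h
end

section
/- Let q ≥ 2 be an integer and d > 0 a real number. Then the polynomial a_p(z) = z^q − z^{q−1} − d has a real root z0 satisfying 1 + d/(1+d)^{q−1} < z0 < 1 + d. -/
theorem realproot (q : ℕ) (hq : 2 ≤ q) (d : ℝ) (hd : 0 < d) :
    ∃ z0 : ℝ, z0 ^ q - z0 ^ (q - 1) - d = 0 ∧
      1 + d / (1 + d) ^ (q - 1) < z0 ∧ z0 < 1 + d := by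
  obtain ⟨n, rfl⟩ : ∃ n, q = n + 1 := ⟨q - 1, by omega⟩
  have hn : n ≠ 0 := by omega
  simp only [Nat.add_sub_cancel]
  have hP : 1 < (1 + d) ^ n := one_lt_pow₀ (by linarith) hn
  have hP0 : 0 < (1 + d) ^ n := by linarith
  have he0 : 0 < d / (1 + d) ^ n := div_pos hd hP0
  have he1 : d / (1 + d) ^ n < d := div_lt_self hd hP
  have hmul : (1 + d) ^ n * (d / (1 + d) ^ n) = d := mul_div_cancel₀ d hP0.ne'
  have hpow : (1 + d / (1 + d) ^ n) ^ n < (1 + d) ^ n :=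
    pow_lt_pow_left₀ (by linarith) (by linarith) hn
  have hc : ContinuousOn (fun z : ℝ => z ^ (n + 1) - z ^ n - d)
      (Set.Icc (1 + d / (1 + d) ^ n) (1 + d)) := by fun_prop
  have h := intermediate_value_Ioo (by linarith) hc
  have h0 : (0 : ℝ) ∈ Set.Ioo ((1 + d / (1 + d) ^ n) ^ (n + 1) - (1 + d / (1 + d) ^ n) ^ n - d)
      ((1 + d) ^ (n + 1) - (1 + d) ^ n - d) := by
    constructor
    · have := mul_lt_mul_of_pos_right hpow he0
      rw [hmul] at this
      rw [pow_succ (1 + d / (1 + d) ^ n)]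
      linarith
    · have := mul_lt_mul_of_pos_right hP hd
      rw [pow_succ]
      linarith
  obtain ⟨z, hz, hz0⟩ := h h0
  exact ⟨z, hz0, hz.1, hz.2⟩
end

section
/- Let q ≥ 2 be an integer and d > 0 a real number. Then the polynomial a_p(z) = z^q − z^{q−1} − d has no complex root z with 0 < arg(z) < π/(q−1). -/
open Real

theorem no_small_angle_root (q : ℕ) (hq : 2 ≤ q) (d : ℝ) (hd : 0 < d) :
    ¬ ∃ z : ℂ, z ^ q - z ^ (q - 1) - (d : ℂ) = 0 ∧
      0 < Complex.arg z ∧ Complex.arg z < π / (q - 1 : ℝ) := by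
  rintro ⟨z, hz, h0, h1⟩
  obtain ⟨n, rfl⟩ : ∃ n, q = n + 1 := ⟨q - 1, by omega⟩
  have hn : (1 : ℝ) ≤ n := by
    have : 1 ≤ n := by omega
    exact_mod_cast this
  have hz0 : z ≠ 0 := by
    rintro rfl
    simp at h0
  have hr : 0 < ‖z‖ := norm_pos_iff.mpr hz0
  have e : ((n + 1 : ℕ) : ℝ) - 1 = n := by push_cast; ring
  rw [e, lt_div_iff₀ (by linarith)] at h1
  have hlt : Complex.arg z < π := by nlinarith
  have hy : 0 < z.im := by
    have h := Complex.norm_mul_sin_arg z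
    rw [← h]
    exact mul_pos hr (Real.sin_pos_of_pos_of_lt_pi h0 hlt)
  have hw : 0 < (z ^ n).im := by
    have h : z ^ n = ((‖z‖ ^ n : ℝ) : ℂ) * Complex.exp (((Complex.arg z * n : ℝ) : ℂ) * Complex.I) := by
      conv_lhs => rw [← Complex.norm_mul_exp_arg_mul_I z]
      rw [mul_pow, ← Complex.exp_nat_mul]
      push_cast
      congr 2
      ring
    rw [h, Complex.im_ofReal_mul, Complex.exp_ofReal_mul_I_im]
    exact mul_pos (pow_pos hr n) (Real.sin_pos_of_pos_of_lt_pi (by positivity) h1)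
  have hm : z ^ n * (z - 1) = d := by
    simp only [Nat.add_sub_cancel] at hz
    linear_combination hz
  generalize z ^ n = w at hw hm
  have hre := congrArg Complex.re hm
  have him := congrArg Complex.im hm
  simp at hre him
  have key : -(z.im * (w.re ^ 2 + w.im ^ 2)) = d * w.im := by
    linear_combination w.im * hre - w.re * him
  have : 0 < d * w.im := mul_pos hd hw
  have : 0 ≤ z.im * (w.re ^ 2 + w.im ^ 2) := by positivity
  linarith
end

section
/- Let a, b, δ > 0 be real numbers, let e(x) = a·x³ + b·x² − δ·x, and set x_min := (√(b² + 3aδ) − b)/(3a). Then −δ²/(√(b² + 3aδ) + b) ≤ e(x_min) ≤ −δ²/(2·(√(b² + 3aδ) + b)). -/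
theorem cubgen_b (a b δ : ℝ) (ha : 0 < a) (hb : 0 < b) (hδ : 0 < δ)
    (xmin : ℝ) (hxmin : xmin = (Real.sqrt (b ^ 2 + 3 * a * δ) - b) / (3 * a)) :
    -δ ^ 2 / (Real.sqrt (b ^ 2 + 3 * a * δ) + b) ≤
      a * xmin ^ 3 + b * xmin ^ 2 - δ * xmin ∧
    a * xmin ^ 3 + b * xmin ^ 2 - δ * xmin ≤
      -δ ^ 2 / (2 * (Real.sqrt (b ^ 2 + 3 * a * δ) + b)) := by
  have hs2 : Real.sqrt (b ^ 2 + 3 * a * δ) ^ 2 = b ^ 2 + 3 * a * δ :=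
    Real.sq_sqrt (by positivity)
  have hs0 : 0 ≤ Real.sqrt (b ^ 2 + 3 * a * δ) := Real.sqrt_nonneg _
  generalize Real.sqrt (b ^ 2 + 3 * a * δ) = s at *
  have hs : s = 3 * a * xmin + b := by
    rw [hxmin]; field_simp; ring
  have hp : 0 < s + b := by linarith
  have hd : δ = xmin * (s + b) := by
    have h : 3 * a * δ = 3 * a * (xmin * (s + b)) := by
      have : 3 * a * xmin = s - b := by linarith
      linear_combination -hs2 - (s + b) * this
    exact mul_left_cancel₀ (by positivity) h
  have hx : 0 < xmin := by
    rw [hd] at hδ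
    exact (pos_iff_pos_of_mul_pos hδ).mpr hp
  have h3 : 0 < a * xmin ^ 3 := by positivity
  have h2 : 0 < b * xmin ^ 2 := by positivity
  have e1 : -δ ^ 2 / (s + b) = -(δ * xmin) := by
    rw [div_eq_iff hp.ne']; linear_combination (-δ) * hd
  have e2 : -δ ^ 2 / (2 * (s + b)) = -(δ * xmin) / 2 := by
    rw [← e1]; field_simp
  have e3 : δ * xmin = 3 * (a * xmin ^ 3) + 2 * (b * xmin ^ 2) := by
    rw [hd, hs]; ring
  rw [e1, e2]
  constructor <;> linarith
end
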